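/- Let R ⊆ X × Y be a relation between finite sets with R(x) ≠ ∅ for all x ∈ X, let x_i, x_j ∈ X be distinct, and let R′ be the reduced relation obtained from R by replacing x_i and x_j with a new element z. Let δ_max = max_{x∈X} |V(St̄_{K_R}(x))|. Then every vertex w of K_{R′} satisfies |V(St̄_{K_{R′}}(w))| ≤ 2·δ_max. -/

import Mathlib

/-- The Dowker complex of a relation `R ⊆ X × Y`. -/
def DowkerK {X Y : Type*} (R : X → Y → Prop) : Set (Finset X) :=
  {σ | σ.Nonempty ∧ ∃ y, ∀ x ∈ σ, R x y}

/-- The closed star of a vertex `x` in a simplicial complex `K`. -/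
def ClosedStar {V : Type*} (K : Set (Finset V)) (x : V) : Set (Finset V) :=
  {σ | σ ∈ K ∧ ∃ τ ∈ K, σ ⊆ τ ∧ x ∈ τ}

/-- The vertex set of a collection of simplices: the union of its members. -/
def vertexSet {V : Type*} (K : Set (Finset V)) : Set V :=
  {v | ∃ σ ∈ K, v ∈ σ}

/-- The reduced relation `R′ ⊆ X′ × Y` obtained from `R ⊆ X × Y` by replacing the two
rows `xi` and `xj` by a new element `z` (encoded as `none`), with
`R′(z) = R(xi) ∪ R(xj)` and `R′(x) = R(x)` for `x ∈ X \ {xi, xj}`. -/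
def ReducedRel {X Y : Type*} (R : X → Y → Prop) (xi xj : X) :
    Option {x : X // x ≠ xi ∧ x ≠ xj} → Y → Prop
  | none, y => R xi y ∨ R xj y
  | some x, y => R x.1 y

/-!
In a Dowker complex, `v` is a vertex of the closed star of `x` iff the rows `R(v)` and `R(x)` meet.
The reduced relation is the image of `R` under the map `π` that merges `xi` and `xj`, so the star of
`w` has as vertices the image under `π` of the union of the stars of the points of `π⁻¹(w)`. Since
images do not increase cardinality, its size is at most `δ_max` times that of the fibre, and a
fibre of `π` has at most two points.
-/

lemma encard_biUnion_le_encard_mul {ι α : Type*} (s : Set ι) (t : ι → Set α) {c : ℕ∞}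
    (hc : ∀ i ∈ s, (t i).encard ≤ c) : (⋃ i ∈ s, t i).encard ≤ s.encard * c := by
  rcases s.finite_or_infinite with hs | hs
  · lift s to Finset ι using hs
    calc (⋃ i ∈ s, t i).encard ≤ ∑ i ∈ s, (t i).encard := s.set_encard_biUnion_le t
      _ ≤ (s : Set ι).encard * c := by
        simpa [Set.encard_coe_eq_coe_finsetCard] using s.sum_le_card_nsmul _ c hc
  · rcases eq_or_ne c 0 with rfl | hc₀
    · have hempty : ∀ i ∈ s, t i = ∅ := by simpa using hc
      simpa using hempty
    · simp [hs.encard_eq, ENat.top_mul hc₀]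

section DowkerComplex

variable {X X' Y Y' : Type*}

lemma mem_vertexSet_closedStar_dowkerK {R : X → Y → Prop} {x v : X} :
    v ∈ vertexSet (ClosedStar (DowkerK R) x) ↔ ∃ y, R v y ∧ R x y := by
  classical
  constructor
  · rintro ⟨σ, ⟨-, τ, ⟨-, y, hy⟩, hστ, hx⟩, hv⟩
    exact ⟨y, hy v (hστ hv), hy x hx⟩
  · rintro ⟨y, hv, hx⟩
    have hedge : {v, x} ∈ DowkerK R := ⟨by simp, y, by simp [hv, hx]⟩
    exact ⟨{v, x}, ⟨hedge, {v, x}, hedge, subset_rfl, by simp⟩, by simp⟩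

lemma vertexSet_closedStar_dowkerK_map (R : X → Y → Prop) (f : X → X') {g : Y → Y'}
    (hg : g.Injective) (w : X') :
    vertexSet (ClosedStar (DowkerK (Relation.Map R f g)) w) =
      f '' ⋃ x ∈ f ⁻¹' {w}, vertexSet (ClosedStar (DowkerK R) x) := by
  ext v
  simp only [mem_vertexSet_closedStar_dowkerK, Set.mem_image, Set.mem_iUnion₂, Set.mem_preimage,
    Set.mem_singleton_iff, exists_prop]
  constructor
  · rintro ⟨_, ⟨u, y, huy, hu, rfl⟩, x, y', hxy', hx, hy'⟩
    obtain rfl := hg hy'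
    exact ⟨u, ⟨x, hx, y', huy, hxy'⟩, hu⟩
  · rintro ⟨u, ⟨x, hx, y, huy, hxy⟩, hu⟩
    exact ⟨g y, ⟨u, y, huy, hu, rfl⟩, x, y, hxy, hx, rfl⟩

lemma encard_vertexSet_closedStar_dowkerK_map_le (R : X → Y → Prop) (f : X → X') {g : Y → Y'}
    (hg : g.Injective) (w : X') :
    (vertexSet (ClosedStar (DowkerK (Relation.Map R f g)) w)).encard ≤
      (f ⁻¹' {w}).encard * ⨆ x, (vertexSet (ClosedStar (DowkerK R) x)).encard := by
  rw [vertexSet_closedStar_dowkerK_map R f hg]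
  exact (Set.encard_image_le f _).trans <|
    encard_biUnion_le_encard_mul _ _ fun x _ ↦
      le_iSup (fun x ↦ (vertexSet (ClosedStar (DowkerK R) x)).encard) x

end DowkerComplex

section Merge

variable {X Y : Type*} (xi xj : X)

open Classical in
/-- The quotient map from `X` to the vertex type of the reduced relation: it sends `xi` and `xj` to
the new element `z = none` and fixes every other point. -/
noncomputable def mergeMap (x : X) : Option {x : X // x ≠ xi ∧ x ≠ xj} :=
  if h : x ≠ xi ∧ x ≠ xj then some ⟨x, h⟩ else none

lemma mergeMap_eq_none_iff {x : X} : mergeMap xi xj x = none ↔ x = xi ∨ x = xj := by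
  simp only [mergeMap, dite_eq_right_iff, reduceCtorEq, imp_false]
  tauto

lemma mergeMap_eq_some_iff {x : X} {a : {x : X // x ≠ xi ∧ x ≠ xj}} :
    mergeMap xi xj x = some a ↔ x = a := by
  grind [mergeMap]

lemma reducedRel_eq_map (R : X → Y → Prop) :
    ReducedRel R xi xj = Relation.Map R (mergeMap xi xj) id := by
  ext w y
  cases w <;>
    simp [ReducedRel, Relation.Map, mergeMap_eq_none_iff, mergeMap_eq_some_iff, and_or_left,
      exists_or]

lemma encard_mergeMap_fiber_le_two (w : Option {x : X // x ≠ xi ∧ x ≠ xj}) :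
    (mergeMap xi xj ⁻¹' {w}).encard ≤ 2 := by
  rcases w with _ | a
  · have hfiber : mergeMap xi xj ⁻¹' {none} = {xi, xj} := by
      ext; simp [mergeMap_eq_none_iff]
    rw [hfiber]
    exact (Set.encard_insert_le {xj} xi).trans (by simp [one_add_one_eq_two])
  · have hfiber : mergeMap xi xj ⁻¹' {some a} = {a.1} := by
      ext; simp [mergeMap_eq_some_iff]
    rw [hfiber, Set.encard_singleton]
    exact one_le_two

end Merge

theorem star_vertex_count_after_reduction_general {X Y : Type*} (R : X → Y → Prop) (xi xj : X)
    (w : Option {x : X // x ≠ xi ∧ x ≠ xj}) :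
    (vertexSet (ClosedStar (DowkerK (ReducedRel R xi xj)) w)).encard ≤
      2 * ⨆ x, (vertexSet (ClosedStar (DowkerK R) x)).encard := by
  rw [reducedRel_eq_map]
  exact (encard_vertexSet_closedStar_dowkerK_map_le R _ Function.injective_id w).trans <|
    mul_le_mul_left (encard_mergeMap_fiber_le_two xi xj w) _

/-- Let `R ⊆ X × Y` be a relation between finite sets with `R(x) ≠ ∅`
for all `x`, `xi ≠ xj`, and `R′` the reduced relation replacing `xi, xj` by `z`.
With `δ_max = max_{x∈X} |V(St̄_{K_R}(x))|`, every vertex `w` of `K_{R′}` satisfies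
`|V(St̄_{K_{R′}}(w))| ≤ 2·δ_max`. -/
theorem star_vertex_count_after_reduction {X Y : Type*} [Fintype X] [Fintype Y]
    (R : X → Y → Prop) (hR : ∀ x, ∃ y, R x y)
    (xi xj : X) (hij : xi ≠ xj) :
    ∀ w : Option {x : X // x ≠ xi ∧ x ≠ xj},
      (vertexSet (ClosedStar (DowkerK (ReducedRel R xi xj)) w)).ncard ≤
        2 * Finset.univ.sup (fun x : X => (vertexSet (ClosedStar (DowkerK R) x)).ncard) := by
  intro w
  simpa [← Nat.cast_le (α := ℕ∞), Finset.sup_univ_eq_ciSup,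
    ENat.natCast_iSup (Set.finite_range _).bddAbove] using
    star_vertex_count_after_reduction_general R xi xj w
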